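/- Let n ≥ 2 be an integer, u₊ : (0,∞) → (−1,1) the inverse of Γ₊, and H₊(t) = (1 + u₊(t)²/(n−1))^{(1/n) − (1/2)} · (1 − u₊(t)²)^{−1/n}. For all real numbers 0 < a < b and every q with a/b < q < b/a, there exists k > 0 such that H₊(k·a) = q · H₊(k·b). -/

import Mathlib

/-- The function `Γ₊` from the paper:
`Γ₊(s) = ((1+s)/(1-s))^(1/n) · exp( ((2-n)/(n√(n-1))) · arctan(s/√(n-1)) )`. -/
noncomputable def GammaPlus (n : ℕ) (s : ℝ) : ℝ :=
  ((1 + s) / (1 - s)) ^ ((1 : ℝ) / (n : ℝ)) *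
    Real.exp (((2 - (n : ℝ)) / ((n : ℝ) * Real.sqrt ((n : ℝ) - 1))) *
      Real.arctan (s / Real.sqrt ((n : ℝ) - 1)))

/-!
Write `H₊ = h ∘ u₊`, where `h` is an even function on `(-1, 1)`. The ratio `h / Γ₊` extends to a
positive continuous function across `s = 1`; since `u₊(t) → 1` as `t → ∞`, `H₊(t)` is asymptotic to
a nonzero multiple of `t`, so `H₊(ka) / H₊(kb) → a / b` as `k → ∞`. The identity
`Γ₊(-s) = Γ₊(s)⁻¹` gives `u₊(t⁻¹) = -u₊(t)`, hence `H₊(t⁻¹) = H₊(t)`, which turns the limit at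
infinity into the limit `b / a` as `k → 0`. The intermediate value theorem does the rest.
-/

open Set Filter Topology

theorem tendsto_atTop_of_monotoneOn_Ioi_of_isLUB {α β : Type*} [LinearOrder α] [NoMaxOrder α]
    [LinearOrder β] [TopologicalSpace β] [OrderTopology β] {f : α → β} {a : α} {x : β}
    (hf : MonotoneOn f (Ioi a)) (hx : IsLUB (f '' Ioi a) x) : Tendsto f atTop (𝓝 x) := by
  refine tendsto_order.2 ⟨fun y hyx => ?_, fun y hxy => ?_⟩
  · obtain ⟨_, ⟨c, hc, rfl⟩, hyc, -⟩ := hx.exists_between hyx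
    filter_upwards [eventually_ge_atTop c] with t ht
    exact hyc.trans_le (hf hc (lt_of_lt_of_le hc ht) ht)
  · filter_upwards [eventually_gt_atTop a] with t ht
    exact (hx.1 (mem_image_of_mem f ht)).trans_lt hxy

section ScaledQuotient

variable {H : ℝ → ℝ} {C a b q : ℝ}

theorem tendsto_comp_mul_div_comp_mul_atTop (hC : C ≠ 0)
    (hlim : Tendsto (fun t => H t / t) atTop (𝓝 C)) (ha : 0 < a) (hb : 0 < b) :
    Tendsto (fun k => H (k * a) / H (k * b)) atTop (𝓝 (a / b)) := by
  have scaled {c : ℝ} (hc : 0 < c) : Tendsto (fun k => H (k * c) / (k * c)) atTop (𝓝 C) :=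
    hlim.comp (tendsto_id.atTop_mul_const hc)
  have quotient := ((scaled ha).div (scaled hb) hC).mul_const (a / b)
  rw [div_self hC, one_mul] at quotient
  refine quotient.congr' ?_
  filter_upwards [eventually_gt_atTop 0] with k hk
  simp only [Pi.div_apply]
  field_simp

theorem tendsto_comp_mul_div_comp_mul_nhdsGT_zero (hC : C ≠ 0)
    (hlim : Tendsto (fun t => H t / t) atTop (𝓝 C)) (hinv : ∀ t, 0 < t → H t⁻¹ = H t)
    (ha : 0 < a) (hb : 0 < b) :
    Tendsto (fun k => H (k * a) / H (k * b)) (𝓝[>] 0) (𝓝 (b / a)) := by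
  have inverted := (tendsto_comp_mul_div_comp_mul_atTop hC hlim (inv_pos.2 ha)
    (inv_pos.2 hb)).comp tendsto_inv_nhdsGT_zero
  rw [inv_div_inv] at inverted
  refine inverted.congr' ?_
  filter_upwards [self_mem_nhdsWithin] with k hk
  simp only [Function.comp_apply, ← mul_inv, hinv _ (mul_pos hk ha), hinv _ (mul_pos hk hb)]

theorem exists_pos_comp_mul_eq_mul_comp_mul (hC : C ≠ 0) (hcont : ContinuousOn H (Ioi 0))
    (hne : ∀ t, 0 < t → H t ≠ 0) (hlim : Tendsto (fun t => H t / t) atTop (𝓝 C))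
    (hinv : ∀ t, 0 < t → H t⁻¹ = H t) (ha : 0 < a) (hb : 0 < b) (hq : q ∈ Ioo (a / b) (b / a)) :
    ∃ k, 0 < k ∧ H (k * a) = q * H (k * b) := by
  have scaled {c : ℝ} (hc : 0 < c) : ContinuousOn (fun k => H (k * c)) (Ioi 0) :=
    hcont.comp (by fun_prop) fun _ hk => mul_pos hk hc
  have quotient : ContinuousOn (fun k => H (k * a) / H (k * b)) (Ioi 0) :=
    (scaled ha).div (scaled hb) fun k hk => hne _ (mul_pos hk hb)
  obtain ⟨k, hk, hkq⟩ := isPreconnected_Ioi.intermediate_value_Ioo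
    (le_principal_iff.2 (Ioi_mem_atTop 0)) (le_principal_iff.2 self_mem_nhdsWithin) quotient
    (tendsto_comp_mul_div_comp_mul_atTop hC hlim ha hb)
    (tendsto_comp_mul_div_comp_mul_nhdsGT_zero hC hlim hinv ha hb) hq
  exact ⟨k, hk, (div_eq_iff (hne _ (mul_pos hk hb))).1 hkq⟩

end ScaledQuotient

section GammaPlus

variable {n : ℕ} {s : ℝ}

theorem gammaPlus_pos (hs : s ∈ Ioo (-1) 1) : 0 < GammaPlus n s := by
  have : 0 < (1 + s) / (1 - s) := div_pos (by linarith [hs.1]) (by linarith [hs.2])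
  unfold GammaPlus
  positivity

theorem gammaPlus_neg (hs : s ∈ Ioo (-1) 1) : GammaPlus n (-s) = (GammaPlus n s)⁻¹ := by
  have quotient_nonneg : 0 ≤ (1 + s) / (1 - s) :=
    div_nonneg (by linarith [hs.1]) (by linarith [hs.2])
  simp only [GammaPlus, sub_neg_eq_add, ← sub_eq_add_neg, neg_div, Real.arctan_neg, mul_neg,
    Real.exp_neg, mul_inv]
  rw [← Real.inv_rpow quotient_nonneg, inv_div]

/-- The logarithm of `Γ₊` on `(-1, 1)`, written as a sum so that it can be differentiated
termwise. -/
noncomputable def logGammaPlus (n : ℕ) (s : ℝ) : ℝ :=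
  1 / (n : ℝ) * (Real.log (1 + s) - Real.log (1 - s)) +
    (2 - (n : ℝ)) / ((n : ℝ) * √((n : ℝ) - 1)) * Real.arctan (s / √((n : ℝ) - 1))

theorem gammaPlus_eq_exp_logGammaPlus (hs : s ∈ Ioo (-1) 1) :
    GammaPlus n s = Real.exp (logGammaPlus n s) := by
  have add_pos : 0 < 1 + s := by linarith [hs.1]
  have sub_pos : 0 < 1 - s := by linarith [hs.2]
  rw [GammaPlus, logGammaPlus, Real.exp_add, Real.rpow_def_of_pos (div_pos add_pos sub_pos),
    Real.log_div add_pos.ne' sub_pos.ne', mul_comm (1 / (n : ℝ))]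

theorem hasDerivAt_log_one_add_sub_log_one_sub (hs : s ∈ Ioo (-1) 1) :
    HasDerivAt (fun x => Real.log (1 + x) - Real.log (1 - x)) (2 / (1 - s ^ 2)) s := by
  have add_ne : 1 + s ≠ 0 := by linarith [hs.1]
  have sub_ne : 1 - s ≠ 0 := by linarith [hs.2]
  refine ((((hasDerivAt_id s).const_add 1).log add_ne).sub
    (((hasDerivAt_id s).const_sub 1).log sub_ne)).congr_deriv ?_
  rw [show 1 - s ^ 2 = (1 + s) * (1 - s) by ring, id]
  field_simp
  ring

theorem hasDerivAt_arctan_div {r : ℝ} (hr : r ≠ 0) (s : ℝ) :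
    HasDerivAt (fun x => Real.arctan (x / r)) (r / (r ^ 2 + s ^ 2)) s := by
  refine ((hasDerivAt_id s).div_const r).arctan.congr_deriv ?_
  have : r ^ 2 + s ^ 2 ≠ 0 := by positivity
  rw [id]
  field_simp

theorem hasDerivAt_logGammaPlus (hn : 2 ≤ n) (hs : s ∈ Ioo (-1) 1) :
    HasDerivAt (logGammaPlus n) ((1 + s ^ 2) / ((1 - s ^ 2) * ((n : ℝ) - 1 + s ^ 2))) s := by
  have two_le : (2 : ℝ) ≤ n := by exact_mod_cast hn
  have sqrt_ne : √((n : ℝ) - 1) ≠ 0 := (Real.sqrt_pos.2 (by linarith)).ne'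
  have sub_sq_ne : 1 - s ^ 2 ≠ 0 := by nlinarith [hs.1, hs.2]
  have denom_ne : (n : ℝ) - 1 + s ^ 2 ≠ 0 := by nlinarith
  refine (((hasDerivAt_log_one_add_sub_log_one_sub hs).const_mul (1 / (n : ℝ))).add
    ((hasDerivAt_arctan_div sqrt_ne s).const_mul _)).congr_deriv ?_
  rw [Real.sq_sqrt (by linarith)]
  field_simp
  ring

theorem strictMonoOn_gammaPlus (hn : 2 ≤ n) : StrictMonoOn (GammaPlus n) (Ioo (-1) 1) := by
  have log_strictMonoOn : StrictMonoOn (logGammaPlus n) (Ioo (-1) 1) := by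
    refine strictMonoOn_of_hasDerivWithinAt_pos (convex_Ioo _ _)
      (fun s hs => (hasDerivAt_logGammaPlus hn hs).continuousAt.continuousWithinAt)
      (fun s hs => (hasDerivAt_logGammaPlus hn (interior_subset hs)).hasDerivWithinAt)
      (fun s hs => ?_)
    rw [interior_Ioo] at hs
    have two_le : (2 : ℝ) ≤ n := by exact_mod_cast hn
    have sub_sq_pos : 0 < 1 - s ^ 2 := by nlinarith [hs.1, hs.2]
    have denom_pos : 0 < (n : ℝ) - 1 + s ^ 2 := by nlinarith
    positivity
  exact (Real.exp_strictMono.comp_strictMonoOn log_strictMonoOn).congr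
    fun s hs => (gammaPlus_eq_exp_logGammaPlus hs).symm

end GammaPlus

/-- `u` agrees on `(0, ∞)` with `u₊`, the inverse of `Γ₊ : (-1, 1) → (0, ∞)`. Its values outside
`(0, ∞)` are arbitrary, and being a right inverse suffices because `Γ₊` is injective. -/
structure IsGammaPlusInverse (n : ℕ) (u : ℝ → ℝ) : Prop where
  mapsTo : MapsTo u (Ioi 0) (Ioo (-1) 1)
  rightInvOn : RightInvOn u (GammaPlus n) (Ioi 0)

namespace IsGammaPlusInverse

variable {n : ℕ} {u : ℝ → ℝ} {t : ℝ}

theorem image_Ioi (hu : IsGammaPlusInverse n u) (hn : 2 ≤ n) : u '' Ioi 0 = Ioo (-1) 1 := by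
  have gamma_mapsTo : MapsTo (GammaPlus n) (Ioo (-1) 1) (Ioi 0) := fun _ => gammaPlus_pos
  have left_inverse : RightInvOn (GammaPlus n) u (Ioo (-1) 1) :=
    (strictMonoOn_gammaPlus hn).injOn.rightInvOn_of_leftInvOn hu.rightInvOn gamma_mapsTo hu.mapsTo
  exact (left_inverse.surjOn gamma_mapsTo).image_eq_of_mapsTo hu.mapsTo

theorem monotoneOn (hu : IsGammaPlusInverse n u) (hn : 2 ≤ n) : MonotoneOn u (Ioi 0) :=
  Function.monotoneOn_of_rightInvOn_of_mapsTo (strictMonoOn_gammaPlus hn).monotoneOn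
    hu.rightInvOn hu.mapsTo

theorem continuousOn (hu : IsGammaPlusInverse n u) (hn : 2 ≤ n) : ContinuousOn u (Ioi 0) := by
  intro t ht
  refine (continuousAt_of_monotoneOn_of_image_mem_nhds (hu.monotoneOn hn)
    (Ioi_mem_nhds ht) ?_).continuousWithinAt
  rw [hu.image_Ioi hn]
  exact isOpen_Ioo.mem_nhds (hu.mapsTo ht)

theorem tendsto_atTop (hu : IsGammaPlusInverse n u) (hn : 2 ≤ n) : Tendsto u atTop (𝓝 1) := by
  refine tendsto_atTop_of_monotoneOn_Ioi_of_isLUB (hu.monotoneOn hn) ?_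
  rw [hu.image_Ioi hn]
  exact isLUB_Ioo (by norm_num)

theorem apply_inv (hu : IsGammaPlusInverse n u) (hn : 2 ≤ n) (ht : 0 < t) : u t⁻¹ = -u t := by
  have hut := hu.mapsTo ht
  refine (strictMonoOn_gammaPlus hn).injOn (hu.mapsTo (inv_pos.2 ht))
    ⟨neg_lt_neg hut.2, neg_lt.1 hut.1⟩ ?_
  rw [gammaPlus_neg hut, hu.rightInvOn ht, hu.rightInvOn (inv_pos.2 ht)]

end IsGammaPlusInverse

section RadialProfile

variable {n : ℕ} {s : ℝ}

/-- The function `h` on `(-1, 1)` with `H₊ = h ∘ u₊`. -/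
noncomputable def radialProfile (n : ℕ) (s : ℝ) : ℝ :=
  (1 + s ^ 2 / ((n : ℝ) - 1)) ^ ((1 : ℝ) / (n : ℝ) - 1 / 2) * (1 - s ^ 2) ^ (-(1 : ℝ) / (n : ℝ))

theorem radialProfile_neg (n : ℕ) (s : ℝ) : radialProfile n (-s) = radialProfile n s := by
  rw [radialProfile, neg_sq, radialProfile]

/-- The quotient `h / Γ₊`, in a form from which the factors singular at `s = 1` have been
cancelled, so that it makes sense on all of `(-1, ∞)`. -/
noncomputable def radialProfileRatio (n : ℕ) (s : ℝ) : ℝ :=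
  (1 + s ^ 2 / ((n : ℝ) - 1)) ^ ((1 : ℝ) / (n : ℝ) - 1 / 2) * (1 + s) ^ (-(2 * (1 / (n : ℝ)))) *
    Real.exp (-((2 - (n : ℝ)) / ((n : ℝ) * √((n : ℝ) - 1)) * Real.arctan (s / √((n : ℝ) - 1))))

theorem one_sub_sq_rpow_neg (hs : s ∈ Ioo (-1) 1) (p : ℝ) :
    (1 - s ^ 2) ^ (-p) = (1 + s) ^ (-(2 * p)) * ((1 + s) / (1 - s)) ^ p := by
  have add_pos : 0 < 1 + s := by linarith [hs.1]
  have sub_pos : 0 < 1 - s := by linarith [hs.2]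
  rw [show 1 - s ^ 2 = (1 + s) * (1 - s) by ring, Real.mul_rpow add_pos.le sub_pos.le,
    Real.div_rpow add_pos.le sub_pos.le, Real.rpow_neg sub_pos.le, mul_div_assoc',
    ← Real.rpow_add add_pos, div_eq_mul_inv]
  ring_nf

theorem radialProfile_eq_ratio_mul_gammaPlus (hs : s ∈ Ioo (-1) 1) :
    radialProfile n s = radialProfileRatio n s * GammaPlus n s := by
  rw [radialProfile, radialProfileRatio, GammaPlus, neg_div, one_sub_sq_rpow_neg hs, Real.exp_neg]
  field_simp

theorem one_add_sq_div_pos (hn : 2 ≤ n) (s : ℝ) : 0 < 1 + s ^ 2 / ((n : ℝ) - 1) := by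
  have two_le : (2 : ℝ) ≤ n := by exact_mod_cast hn
  have sub_one_pos : 0 < (n : ℝ) - 1 := by linarith
  positivity

theorem radialProfileRatio_pos (hn : 2 ≤ n) (hs : -1 < s) : 0 < radialProfileRatio n s := by
  have base_pos := one_add_sq_div_pos hn s
  have add_pos : 0 < 1 + s := by linarith
  unfold radialProfileRatio
  positivity

theorem continuousAt_radialProfileRatio (hn : 2 ≤ n) (hs : -1 < s) :
    ContinuousAt (radialProfileRatio n) s := by
  have base_ne := (one_add_sq_div_pos hn s).ne'
  have add_ne : 1 + s ≠ 0 := by linarith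
  have base_cont : ContinuousAt (fun x : ℝ => 1 + x ^ 2 / ((n : ℝ) - 1)) s := by fun_prop
  have add_cont : ContinuousAt (fun x : ℝ => 1 + x) s := by fun_prop
  unfold radialProfileRatio
  exact ((base_cont.rpow_const (.inl base_ne)).mul (add_cont.rpow_const (.inl add_ne))).mul
    (by fun_prop)

end RadialProfile

namespace IsGammaPlusInverse

variable {n : ℕ} {u : ℝ → ℝ} {t : ℝ}

theorem radialProfile_eq_ratio_mul (hu : IsGammaPlusInverse n u) (ht : 0 < t) :
    radialProfile n (u t) = radialProfileRatio n (u t) * t := by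
  rw [radialProfile_eq_ratio_mul_gammaPlus (hu.mapsTo ht), hu.rightInvOn ht]

theorem radialProfile_pos (hu : IsGammaPlusInverse n u) (hn : 2 ≤ n) (ht : 0 < t) :
    0 < radialProfile n (u t) := by
  rw [hu.radialProfile_eq_ratio_mul ht]
  exact mul_pos (radialProfileRatio_pos hn (hu.mapsTo ht).1) ht

theorem continuousOn_radialProfile (hu : IsGammaPlusInverse n u) (hn : 2 ≤ n) :
    ContinuousOn (fun t => radialProfile n (u t)) (Ioi 0) := by
  have ratio_comp : ContinuousOn (fun t => radialProfileRatio n (u t)) (Ioi 0) := fun t ht =>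
    (continuousAt_radialProfileRatio hn (hu.mapsTo ht).1).comp_continuousWithinAt
      (hu.continuousOn hn t ht)
  exact (ratio_comp.mul continuousOn_id).congr fun t ht => hu.radialProfile_eq_ratio_mul ht

theorem tendsto_radialProfile_div_atTop (hu : IsGammaPlusInverse n u) (hn : 2 ≤ n) :
    Tendsto (fun t => radialProfile n (u t) / t) atTop (𝓝 (radialProfileRatio n 1)) := by
  refine ((continuousAt_radialProfileRatio hn (by norm_num)).tendsto.comp
    (hu.tendsto_atTop hn)).congr' ?_
  filter_upwards [eventually_gt_atTop 0] with t ht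
  rw [hu.radialProfile_eq_ratio_mul ht, mul_div_cancel_right₀ _ ht.ne', Function.comp_apply]

theorem radialProfile_inv (hu : IsGammaPlusInverse n u) (hn : 2 ≤ n) (ht : 0 < t) :
    radialProfile n (u t⁻¹) = radialProfile n (u t) := by
  rw [hu.apply_inv hn ht, radialProfile_neg]

end IsGammaPlusInverse

/-- Case 3 of the boundary value problem.
With `u₊` the inverse of `Γ₊` and
`H₊(t) = (1 + u₊(t)²/(n-1))^(1/n - 1/2) · (1 - u₊(t)²)^(-1/n)`:
for all `0 < a < b` and every `q` with `a/b < q < b/a` there exists `k > 0`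
such that `H₊(k a) = q · H₊(k b)`. -/
theorem stmt11 (n : ℕ) (hn : 2 ≤ n) (u : ℝ → ℝ)
    (hu_mem : ∀ t : ℝ, 0 < t → u t ∈ Set.Ioo (-1 : ℝ) 1)
    (hu_inv : ∀ t : ℝ, 0 < t → GammaPlus n (u t) = t)
    (H : ℝ → ℝ)
    (hH : ∀ t : ℝ, 0 < t →
      H t = (1 + (u t) ^ 2 / ((n : ℝ) - 1)) ^ ((1 : ℝ) / (n : ℝ) - 1 / 2) *
        (1 - (u t) ^ 2) ^ (-(1 : ℝ) / (n : ℝ))) :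
    ∀ a b q : ℝ, 0 < a → a < b → a / b < q → q < b / a →
      ∃ k : ℝ, 0 < k ∧ H (k * a) = q * H (k * b) := by
  intro a b q ha hab haq hqb
  have hb : 0 < b := ha.trans hab
  have hu : IsGammaPlusInverse n u := ⟨hu_mem, hu_inv⟩
  obtain ⟨k, hk, hkq⟩ := exists_pos_comp_mul_eq_mul_comp_mul
    (radialProfileRatio_pos hn (by norm_num)).ne' (hu.continuousOn_radialProfile hn)
    (fun _ ht => (hu.radialProfile_pos hn ht).ne') (hu.tendsto_radialProfile_div_atTop hn)
    (fun _ => hu.radialProfile_inv hn) ha hb ⟨haq, hqb⟩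
  refine ⟨k, hk, ?_⟩
  rw [hH _ (mul_pos hk ha), hH _ (mul_pos hk hb)]
  exact hkq
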